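/- If random variables α and β on a finite probability space are conditionally independent of order k, and γ is an arbitrary random variable on the same probability space, then H(γ) ≤ 2^k·H(γ|α) + 2^k·H(γ|β). -/

import Mathlib

open scoped BigOperators Classical

noncomputable section

/-- Probability of an event `E` under a distribution `μ` on a finite sample space `Ω`. -/
def pr {Ω : Type} [Fintype Ω] (μ : Ω → ℝ) (E : Ω → Prop) : ℝ :=
  ∑ ω, if E ω then μ ω else 0

/-- `μ` is a probability distribution on the finite space `Ω`. -/
def IsProb {Ω : Type} [Fintype Ω] (μ : Ω → ℝ) : Prop :=
  (∀ ω, 0 ≤ μ ω) ∧ ∑ ω, μ ω = 1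

/-- Shannon entropy (base 2) of a random variable `α` on a finite probability space. -/
def ent {Ω A : Type} [Fintype Ω] (μ : Ω → ℝ) (α : Ω → A) : ℝ :=
  -∑ a ∈ Finset.univ.image α,
      pr μ (fun ω => α ω = a) * Real.logb 2 (pr μ (fun ω => α ω = a))

/-- Conditional entropy `H(α | β)`. -/
def condEnt {Ω A B : Type} [Fintype Ω] (μ : Ω → ℝ) (α : Ω → A) (β : Ω → B) : ℝ :=
  ent μ (fun ω => (α ω, β ω)) - ent μ β

/-- Mutual information `I(α : β)`. -/
def mutualInfo {Ω A B : Type} [Fintype Ω] (μ : Ω → ℝ) (α : Ω → A) (β : Ω → B) : ℝ :=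
  ent μ α + ent μ β - ent μ (fun ω => (α ω, β ω))

/-- Conditional mutual information `I(α : β | γ)`. -/
def condMutualInfo {Ω A B C : Type} [Fintype Ω] (μ : Ω → ℝ)
    (α : Ω → A) (β : Ω → B) (γ : Ω → C) : ℝ :=
  condEnt μ α γ + condEnt μ β γ - condEnt μ (fun ω => (α ω, β ω)) γ

/-- Independence of two random variables. -/
def Indep {Ω A B : Type} [Fintype Ω] (μ : Ω → ℝ) (α : Ω → A) (β : Ω → B) : Prop :=
  ∀ (a : A) (b : B),
    pr μ (fun ω => α ω = a ∧ β ω = b) =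
      pr μ (fun ω => α ω = a) * pr μ (fun ω => β ω = b)

/-- Auxiliary form of "conditionally independent of order `k`" (explicit `Fintype`):
`α` and `β` are conditionally independent of order `0` if they are independent,
and of order `k + 1` if on some finite probability space there are random variables
`α₀, β₀, α*, β*` such that `(α₀, β₀)` has the same joint distribution as `(α, β)`,
`I(α₀ : β₀ | α*) = 0`, `I(α₀ : β₀ | β*) = 0`, and `α*, β*` are conditionally
independent of order `k`. -/
def CondIndepOrderAux : ℕ → (Ω A B : Type) → Fintype Ω → (Ω → ℝ) → (Ω → A) → (Ω → B) → Prop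
  | 0, _Ω, _A, _B, iΩ, μ, α, β => @Indep _ _ _ iΩ μ α β
  | k+1, _Ω, A, B, iΩ, μ, α, β =>
      ∃ (Ω' A' B' : Type) (iΩ' : Fintype Ω') (μ' : Ω' → ℝ)
        (α₀ : Ω' → A) (β₀ : Ω' → B) (αs : Ω' → A') (βs : Ω' → B'),
        @IsProb _ iΩ' μ' ∧
        (∀ (a : A) (b : B),
          @pr _ iΩ' μ' (fun ω => α₀ ω = a ∧ β₀ ω = b) =
            @pr _ iΩ μ (fun ω => α ω = a ∧ β ω = b)) ∧
        @condMutualInfo _ _ _ _ iΩ' μ' α₀ β₀ αs = 0 ∧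
        @condMutualInfo _ _ _ _ iΩ' μ' α₀ β₀ βs = 0 ∧
        CondIndepOrderAux k Ω' A' B' iΩ' μ' αs βs

/-- Random variables `α` and `β` on a finite probability space are
conditionally independent of order `k`. -/
def CondIndepOrder {Ω A B : Type} [iΩ : Fintype Ω]
    (μ : Ω → ℝ) (α : Ω → A) (β : Ω → B) (k : ℕ) : Prop :=
  CondIndepOrderAux k Ω A B iΩ μ α β

/-- An `m × n` joint probability matrix: nonnegative entries summing to `1`. -/
def IsJointProbMatrix {m n : ℕ} (M : Matrix (Fin m) (Fin n) ℝ) : Prop :=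
  (∀ i j, 0 ≤ M i j) ∧ ∑ i, ∑ j, M i j = 1

/-- `M` is the joint probability matrix of the pair `(α, β)`. -/
def IsJointMatrixOf {Ω : Type} [Fintype Ω] {m n : ℕ} (M : Matrix (Fin m) (Fin n) ℝ)
    (μ : Ω → ℝ) (α : Ω → Fin m) (β : Ω → Fin n) : Prop :=
  ∀ i j, M i j = pr μ (fun ω => α ω = i ∧ β ω = j)

/-- `M` is a block matrix: rows and columns can be partitioned into two nonempty
parts so that the two diagonal blocks each contain a nonzero element and all
entries outside the diagonal blocks vanish. -/
def IsBlockMatrix {m n : ℕ} (M : Matrix (Fin m) (Fin n) ℝ) : Prop :=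
  ∃ (I₁ : Finset (Fin m)) (J₁ : Finset (Fin n)),
    I₁.Nonempty ∧ I₁ᶜ.Nonempty ∧ J₁.Nonempty ∧ J₁ᶜ.Nonempty ∧
    (∃ i ∈ I₁, ∃ j ∈ J₁, M i j ≠ 0) ∧
    (∃ i ∈ I₁ᶜ, ∃ j ∈ J₁ᶜ, M i j ≠ 0) ∧
    (∀ i j, ((i ∈ I₁ ∧ j ∈ J₁ᶜ) ∨ (i ∈ I₁ᶜ ∧ j ∈ J₁)) → M i j = 0)

/-- `M` is a good matrix: the joint probability matrix of some pair of
conditionally independent random variables (of some finite order). -/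
def IsGoodMatrix {m n : ℕ} (M : Matrix (Fin m) (Fin n) ℝ) : Prop :=
  ∃ (Ω : Type) (iΩ : Fintype Ω) (μ : Ω → ℝ) (α : Ω → Fin m) (β : Ω → Fin n) (k : ℕ),
    @IsProb _ iΩ μ ∧ @IsJointMatrixOf _ iΩ _ _ M μ α β ∧
    @CondIndepOrder _ _ _ iΩ μ α β k

/-- A stochastic matrix: nonnegative entries, all row sums equal to `1`. -/
def IsStochastic {m n : ℕ} (A : Matrix (Fin m) (Fin n) ℝ) : Prop :=
  (∀ i j, 0 ≤ A i j) ∧ ∀ i, ∑ j, A i j = 1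

/-- The matrix `D_ε`: diagonal entries `1/2 - ε`, off-diagonal entries `ε`. -/
def Dmat (ε : ℝ) : Matrix (Fin 2) (Fin 2) ℝ :=
  fun i j => if i = j then 1/2 - ε else ε

/-- The distribution of `n` i.i.d. trials, each distributed according to `μ`. -/
def iidMeasure {Ω : Type} [Fintype Ω] (μ : Ω → ℝ) (n : ℕ) : (Fin n → Ω) → ℝ :=
  fun ωv => ∏ i, μ (ωv i)

/-- The sequence of `n` coordinatewise copies of a random variable. -/
def iidRV {Ω A : Type} (α : Ω → A) (n : ℕ) : (Fin n → Ω) → (Fin n → A) :=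
  fun ωv i => α (ωv i)

/-- `(u, v, w)` belongs to the rate region of the pair `(α, β)`. -/
def InRateRegion {Ω A B : Type} [Fintype Ω] (μ : Ω → ℝ) (α : Ω → A) (β : Ω → B)
    (u v w : ℝ) : Prop :=
  0 ≤ u ∧ 0 ≤ v ∧ 0 ≤ w ∧
  ∀ ε > (0:ℝ), ∀ δ > (0:ℝ), ∃ n₀ : ℕ, ∀ n ≥ n₀,
    ∃ (t : (Fin n → A) × (Fin n → B) → (Fin ⌊(u + δ) * n⌋₊ → Bool))
      (f : (Fin n → A) × (Fin n → B) → (Fin ⌊(v + δ) * n⌋₊ → Bool))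
      (g : (Fin n → A) × (Fin n → B) → (Fin ⌊(w + δ) * n⌋₊ → Bool))
      (r : (Fin ⌊(u + δ) * n⌋₊ → Bool) × (Fin ⌊(v + δ) * n⌋₊ → Bool) → (Fin n → A))
      (s : (Fin ⌊(u + δ) * n⌋₊ → Bool) × (Fin ⌊(w + δ) * n⌋₊ → Bool) → (Fin n → B)),
      pr (iidMeasure μ n) (fun ωv =>
          r (t (iidRV α n ωv, iidRV β n ωv), f (iidRV α n ωv, iidRV β n ωv)) = iidRV α n ωv)
        > 1 - ε ∧
      pr (iidMeasure μ n) (fun ωv =>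
          s (t (iidRV α n ωv, iidRV β n ωv), g (iidRV α n ωv, iidRV β n ωv)) = iidRV β n ωv)
        > 1 - ε

/-- The support of a matrix: the set of positions of its nonzero entries. -/
def msupport {m n : ℕ} (M : Matrix (Fin m) (Fin n) ℝ) : Set (Fin m × Fin n) :=
  {p | M p.1 p.2 ≠ 0}

/-- An r-matrix: nonnegative entries and rectangular support. -/
def IsRMatrix {m n : ℕ} (M : Matrix (Fin m) (Fin n) ℝ) : Prop :=
  (∀ i j, 0 ≤ M i j) ∧ ∃ (A : Set (Fin m)) (B : Set (Fin n)), msupport M = A ×ˢ B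

/-- An r-decomposition of `M`: an expression of `M` as a finite sum of r-matrices
such that the supports of consecutive summands intersect. -/
def IsRDecomposition {m n : ℕ} (M : Matrix (Fin m) (Fin n) ℝ)
    (l : ℕ) (Ms : Fin l → Matrix (Fin m) (Fin n) ℝ) : Prop :=
  M = ∑ i, Ms i ∧ (∀ i, IsRMatrix (Ms i)) ∧
  ∀ (i : ℕ) (h : i + 1 < l),
    (msupport (Ms ⟨i, Nat.lt_of_succ_lt h⟩) ∩ msupport (Ms ⟨i + 1, h⟩)).Nonempty

end

/-!
Shannon's inequality `0 ≤ I(X : Y | Z)`, which is Gibbs' inequality for the law of `(X, Y, Z)`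
against the Markov law `p(x, z) p(y, z) / p(z)`, gives
`H(γ) ≤ H(γ|α) + H(γ|β) + I(α : β)` and `H(γ|δ) ≤ H(γ|α) + H(γ|β) + I(α : β | δ)`.
The first settles order `0`. For order `k + 1`, couple the given space with the one carrying
`α*` and `β*` along the common law of `(α, β)`, so that all five variables live together. The order
`k` bound through `α*` and `β*`, followed by the second inequality with `δ = α*` and `δ = β*`,
doubles the constant.
-/

section Probability

variable {Ω A B : Type} [Fintype Ω] {μ : Ω → ℝ}

lemma pr_nonneg (hμ : ∀ ω, 0 ≤ μ ω) (E : Ω → Prop) : 0 ≤ pr μ E :=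
  Finset.sum_nonneg fun ω _ ↦ by split_ifs <;> simp [hμ ω]

lemma pr_mono (hμ : ∀ ω, 0 ≤ μ ω) {E F : Ω → Prop} (hEF : ∀ ω, E ω → F ω) : pr μ E ≤ pr μ F := by
  refine Finset.sum_le_sum fun ω _ ↦ ?_
  by_cases hE : E ω
  · simp [hE, hEF ω hE]
  · rw [if_neg hE]
    split_ifs <;> simp [hμ ω]

lemma pr_pos (hμ : ∀ ω, 0 ≤ μ ω) {E : Ω → Prop} {ω : Ω} (hω : μ ω ≠ 0) (hE : E ω) :
    0 < pr μ E := by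
  refine Finset.sum_pos' (fun ω _ ↦ by split_ifs <;> simp [hμ ω]) ⟨ω, Finset.mem_univ ω, ?_⟩
  simpa [hE] using (hμ ω).lt_of_ne' hω

lemma pr_eq_self_ne_zero (hμ : ∀ ω, 0 ≤ μ ω) {ω : Ω} (hω : μ ω ≠ 0) (X : Ω → A) :
    pr μ (fun ω' ↦ X ω' = X ω) ≠ 0 :=
  (pr_pos (E := fun ω' ↦ X ω' = X ω) hμ hω rfl).ne'

lemma div_pr_mul_pr (hμ : ∀ ω, 0 ≤ μ ω) (X : Ω → A) (ω : Ω) :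
    μ ω / pr μ (fun ω' ↦ X ω' = X ω) * pr μ (fun ω' ↦ X ω' = X ω) = μ ω :=
  div_mul_cancel_of_imp fun h ↦ of_not_not fun hω ↦ pr_eq_self_ne_zero hμ hω X h

lemma pr_id_eq (μ : Ω → ℝ) (ω : Ω) : pr μ (fun ω' ↦ id ω' = ω) = μ ω := by
  simp [pr]

lemma pr_const_mul (μ : Ω → ℝ) (c : ℝ) (E : Ω → Prop) :
    pr (fun ω ↦ c * μ ω) E = c * pr μ E := by
  simp only [pr, Finset.mul_sum, mul_ite, mul_zero]

lemma sum_pr_mul (μ : Ω → ℝ) {X : Ω → A} {S : Finset A} (hS : ∀ ω, X ω ∈ S) (f : A → ℝ) :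
    ∑ a ∈ S, pr μ (fun ω ↦ X ω = a) * f a = ∑ ω, μ ω * f (X ω) := by
  simp only [pr, Finset.sum_mul, ite_mul, zero_mul]
  rw [Finset.sum_comm]
  exact Finset.sum_congr rfl fun ω _ ↦ by rw [Finset.sum_ite_eq, if_pos (hS ω)]

lemma sum_pr (μ : Ω → ℝ) {X : Ω → A} {S : Finset A} (hS : ∀ ω, X ω ∈ S) :
    ∑ a ∈ S, pr μ (fun ω ↦ X ω = a) = ∑ ω, μ ω := by
  simpa using sum_pr_mul μ hS 1

lemma sum_pr_prodMk (μ : Ω → ℝ) {X : Ω → A} {S : Finset A} (hS : ∀ ω, X ω ∈ S) (Y : Ω → B)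
    (b : B) : ∑ a ∈ S, pr μ (fun ω ↦ (X ω, Y ω) = (a, b)) = pr μ (fun ω ↦ Y ω = b) := by
  simp only [pr, Prod.mk.injEq]
  rw [Finset.sum_comm]
  refine Finset.sum_congr rfl fun ω _ ↦ ?_
  by_cases hY : Y ω = b <;> simp [hY, hS ω]

end Probability

section Entropy

variable {Ω A B C D : Type} [Fintype Ω] {μ : Ω → ℝ}

lemma ent_eq_neg_sum_mul_logb (μ : Ω → ℝ) (X : Ω → A) :
    ent μ X = -∑ ω, μ ω * Real.logb 2 (pr μ fun ω' ↦ X ω' = X ω) := by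
  rw [ent, sum_pr_mul μ (fun ω ↦ Finset.mem_image_of_mem X (Finset.mem_univ ω))
    fun a ↦ Real.logb 2 (pr μ fun ω ↦ X ω = a)]

lemma ent_comp_of_injective (μ : Ω → ℝ) (X : Ω → A) {f : A → B} (hf : Function.Injective f) :
    ent μ (fun ω ↦ f (X ω)) = ent μ X := by
  simp only [ent_eq_neg_sum_mul_logb, hf.eq_iff]

lemma ent_prodMk_comm (μ : Ω → ℝ) (X : Ω → A) (Y : Ω → B) :
    ent μ (fun ω ↦ (X ω, Y ω)) = ent μ (fun ω ↦ (Y ω, X ω)) :=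
  ent_comp_of_injective μ (fun ω ↦ (Y ω, X ω)) Prod.swap_injective

lemma ent_comp_le (hμ : ∀ ω, 0 ≤ μ ω) (X : Ω → A) (f : A → B) :
    ent μ (fun ω ↦ f (X ω)) ≤ ent μ X := by
  rw [ent_eq_neg_sum_mul_logb, ent_eq_neg_sum_mul_logb, neg_le_neg_iff]
  refine Finset.sum_le_sum fun ω _ ↦ ?_
  by_cases hω : μ ω = 0
  · simp [hω]
  · exact mul_le_mul_of_nonneg_left (Real.logb_le_logb_of_le one_lt_two (pr_pos hμ hω rfl)
      (pr_mono hμ fun _ h ↦ congrArg f h)) (hμ ω)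

lemma mul_log_sub_log_le_sub {p q : ℝ} (hp : 0 ≤ p) (hq : 0 ≤ q) (hpq : p ≠ 0 → q ≠ 0) :
    p * (Real.log q - Real.log p) ≤ q - p := by
  obtain rfl | hp0 := eq_or_ne p 0
  · simpa using hq
  have hp' : 0 < p := hp.lt_of_ne' hp0
  have hq' : 0 < q := hq.lt_of_ne' (hpq hp0)
  calc p * (Real.log q - Real.log p) = p * Real.log (q / p) := by
        rw [Real.log_div hq'.ne' hp0]
    _ ≤ p * (q / p - 1) := by gcongr; exact Real.log_le_sub_one_of_pos (div_pos hq' hp')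
    _ = q - p := by field_simp

lemma sum_mul_logb_le_sum_mul_logb {ι : Type*} {s : Finset ι} {p q : ι → ℝ} {b : ℝ}
    (hb : 1 < b) (hp : ∀ i ∈ s, 0 ≤ p i) (hq : ∀ i ∈ s, 0 ≤ q i)
    (hpq : ∀ i ∈ s, p i ≠ 0 → q i ≠ 0) (hsum : ∑ i ∈ s, q i ≤ ∑ i ∈ s, p i) :
    ∑ i ∈ s, p i * Real.logb b (q i) ≤ ∑ i ∈ s, p i * Real.logb b (p i) := by
  have hlog : ∑ i ∈ s, p i * (Real.log (q i) - Real.log (p i)) ≤ 0 :=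
    calc ∑ i ∈ s, p i * (Real.log (q i) - Real.log (p i))
        ≤ ∑ i ∈ s, (q i - p i) := Finset.sum_le_sum fun i hi ↦
          mul_log_sub_log_le_sub (hp i hi) (hq i hi) (hpq i hi)
      _ ≤ 0 := by rw [Finset.sum_sub_distrib]; linarith
  simp only [mul_sub, Finset.sum_sub_distrib, sub_nonpos] at hlog
  simp only [Real.logb, ← mul_div_assoc, ← Finset.sum_div]
  exact div_le_div_of_nonneg_right hlog (Real.log_pos hb).le

/-- The distribution `p(x, z) p(y, z) / p(z)` of a triple in which `X` and `Y` are conditionally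
independent given `Z` while `(X, Z)` and `(Y, Z)` keep their laws under `μ`; the reference
distribution for `I(X : Y | Z)`. It is `0` where `p(z) = 0`. -/
noncomputable def markovLaw (μ : Ω → ℝ) (X : Ω → A) (Y : Ω → B) (Z : Ω → C) :
    (A × B) × C → ℝ := fun t ↦
  pr μ (fun ω ↦ (X ω, Z ω) = (t.1.1, t.2)) * pr μ (fun ω ↦ (Y ω, Z ω) = (t.1.2, t.2)) /
    pr μ fun ω ↦ Z ω = t.2

lemma markovLaw_nonneg (hμ : ∀ ω, 0 ≤ μ ω) (X : Ω → A) (Y : Ω → B) (Z : Ω → C)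
    (t : (A × B) × C) : 0 ≤ markovLaw μ X Y Z t :=
  div_nonneg (mul_nonneg (pr_nonneg hμ _) (pr_nonneg hμ _)) (pr_nonneg hμ _)

lemma markovLaw_ne_zero (hμ : ∀ ω, 0 ≤ μ ω) {X : Ω → A} {Y : Ω → B} {Z : Ω → C}
    {t : (A × B) × C} (ht : pr μ (fun ω ↦ ((X ω, Y ω), Z ω) = t) ≠ 0) :
    markovLaw μ X Y Z t ≠ 0 := by
  have pr_ne_zero {E : Ω → Prop} (hE : ∀ ω, ((X ω, Y ω), Z ω) = t → E ω) : pr μ E ≠ 0 :=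
    (((pr_nonneg hμ _).lt_of_ne' ht).trans_le (pr_mono hμ hE)).ne'
  refine div_ne_zero (mul_ne_zero (pr_ne_zero ?_) (pr_ne_zero ?_)) (pr_ne_zero ?_) <;>
    rintro ω rfl <;> rfl

lemma sum_markovLaw (μ : Ω → ℝ) {X : Ω → A} {Y : Ω → B} {Z : Ω → C} {S : Finset A} {T : Finset B}
    {U : Finset C} (hS : ∀ ω, X ω ∈ S) (hT : ∀ ω, Y ω ∈ T) (hU : ∀ ω, Z ω ∈ U) :
    ∑ t ∈ (S ×ˢ T) ×ˢ U, markovLaw μ X Y Z t = ∑ ω, μ ω := by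
  rw [Finset.sum_product_right, ← sum_pr μ hU]
  refine Finset.sum_congr rfl fun z _ ↦ ?_
  simp only [markovLaw, ← Finset.sum_div, Finset.sum_product]
  rw [← Finset.sum_mul_sum, sum_pr_prodMk μ hS,
    sum_pr_prodMk μ hT, mul_self_div_self]

lemma sum_mul_logb_markovLaw (hμ : ∀ ω, 0 ≤ μ ω) (X : Ω → A) (Y : Ω → B) (Z : Ω → C) :
    ∑ ω, μ ω * Real.logb 2 (markovLaw μ X Y Z ((X ω, Y ω), Z ω)) =
      ent μ Z - ent μ (fun ω ↦ (X ω, Z ω)) - ent μ (fun ω ↦ (Y ω, Z ω)) := by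
  simp only [ent_eq_neg_sum_mul_logb, ← Finset.sum_neg_distrib, ← Finset.sum_sub_distrib]
  refine Finset.sum_congr rfl fun ω _ ↦ ?_
  by_cases hω : μ ω = 0
  · simp [hω]
  have hXZ := pr_eq_self_ne_zero hμ hω fun ω ↦ (X ω, Z ω)
  have hYZ := pr_eq_self_ne_zero hμ hω fun ω ↦ (Y ω, Z ω)
  have hZ := pr_eq_self_ne_zero hμ hω Z
  rw [markovLaw, Real.logb_div (mul_ne_zero hXZ hYZ) hZ, Real.logb_mul hXZ hYZ]
  ring

lemma condMutualInfo_nonneg (hμ : ∀ ω, 0 ≤ μ ω) (X : Ω → A) (Y : Ω → B) (Z : Ω → C) :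
    0 ≤ condMutualInfo μ X Y Z := by
  have mem_image {D : Type} (V : Ω → D) (ω : Ω) : V ω ∈ Finset.univ.image V :=
    Finset.mem_image_of_mem V (Finset.mem_univ ω)
  have mem_range (ω : Ω) : ((X ω, Y ω), Z ω) ∈
      (Finset.univ.image X ×ˢ Finset.univ.image Y) ×ˢ Finset.univ.image Z :=
    Finset.mk_mem_product (Finset.mk_mem_product (mem_image X ω) (mem_image Y ω)) (mem_image Z ω)
  have gibbs := sum_mul_logb_le_sum_mul_logb one_lt_two (fun t _ ↦ pr_nonneg hμ _)
    (fun t _ ↦ markovLaw_nonneg hμ X Y Z t) (fun t _ ↦ markovLaw_ne_zero hμ)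
    ((sum_markovLaw μ (mem_image X) (mem_image Y) (mem_image Z)).trans_le (sum_pr μ mem_range).ge)
  rw [sum_pr_mul μ mem_range, sum_mul_logb_markovLaw hμ,
    sum_pr_mul μ mem_range fun t ↦ Real.logb 2 (pr μ fun ω ↦ ((X ω, Y ω), Z ω) = t),
    ← neg_le_neg_iff, ← ent_eq_neg_sum_mul_logb] at gibbs
  simp only [condMutualInfo, condEnt]
  linarith

lemma mutualInfo_eq_zero_of_indep (hμ : ∀ ω, 0 ≤ μ ω) {X : Ω → A} {Y : Ω → B}
    (hXY : Indep μ X Y) : mutualInfo μ X Y = 0 := by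
  rw [mutualInfo, sub_eq_zero]
  simp only [ent_eq_neg_sum_mul_logb, Prod.mk.injEq, ← neg_add, ← Finset.sum_add_distrib]
  congr! 2 with ω
  by_cases hω : μ ω = 0
  · simp [hω]
  · rw [hXY, Real.logb_mul (pr_eq_self_ne_zero hμ hω X) (pr_eq_self_ne_zero hμ hω Y),
      mul_add]

lemma ent_le_condEnt_add_condEnt_add_mutualInfo (hμ : ∀ ω, 0 ≤ μ ω) (X : Ω → A) (Y : Ω → B)
    (Z : Ω → C) : ent μ Z ≤ condEnt μ Z X + condEnt μ Z Y + mutualInfo μ X Y := by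
  have shannon := condMutualInfo_nonneg hμ X Y Z
  have mono := ent_comp_le hμ (fun ω ↦ ((X ω, Y ω), Z ω)) Prod.fst
  simp only [condMutualInfo, condEnt, mutualInfo] at *
  linarith [ent_prodMk_comm μ X Z, ent_prodMk_comm μ Y Z]

lemma condEnt_le_condEnt_add_condEnt_add_condMutualInfo (hμ : ∀ ω, 0 ≤ μ ω) (X : Ω → A)
    (Y : Ω → B) (Z : Ω → C) (W : Ω → D) :
    condEnt μ Z W ≤ condEnt μ Z X + condEnt μ Z Y + condMutualInfo μ X Y W := by
  have shannon := condMutualInfo_nonneg hμ X Y fun ω ↦ (Z ω, W ω)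
  have shannonX := condMutualInfo_nonneg hμ Z W X
  have shannonY := condMutualInfo_nonneg hμ Z W Y
  have mono := ent_comp_le hμ (fun ω ↦ ((X ω, Y ω), Z ω, W ω)) (Prod.map id Prod.snd)
  simp only [condMutualInfo, condEnt, Prod.map_apply, id_eq] at *
  linarith [ent_prodMk_comm μ X fun ω ↦ (Z ω, W ω), ent_prodMk_comm μ Y fun ω ↦ (Z ω, W ω),
    ent_prodMk_comm μ X W, ent_prodMk_comm μ Y W]

end Entropy

/-- `X` under `μ` and `Y` under `μ'` have the same distribution. The weights need not be normalized.
A map `π : Ω' → Ω` pushes `μ'` forward to `μ` when `SameLaw μ' μ π id`. -/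
def SameLaw {Ω Ω' S : Type} [Fintype Ω] [Fintype Ω'] (μ : Ω → ℝ) (μ' : Ω' → ℝ) (X : Ω → S)
    (Y : Ω' → S) : Prop :=
  ∀ s, pr μ (fun ω ↦ X ω = s) = pr μ' fun ω ↦ Y ω = s

namespace SameLaw

variable {Ω Ω' A B C S T : Type} [Fintype Ω] [Fintype Ω'] {μ : Ω → ℝ} {μ' : Ω' → ℝ} {X : Ω → S}
  {Y : Ω' → S}

lemma symm (h : SameLaw μ μ' X Y) : SameLaw μ' μ Y X := fun s ↦ (h s).symm

lemma sum_mul_eq (h : SameLaw μ μ' X Y) (f : S → ℝ) :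
    ∑ ω, μ ω * f (X ω) = ∑ ω, μ' ω * f (Y ω) := by
  let R := Finset.univ.image X ∪ Finset.univ.image Y
  have hX (ω : Ω) : X ω ∈ R := by simp [R]
  have hY (ω : Ω') : Y ω ∈ R := by simp [R]
  rw [← sum_pr_mul μ hX, ← sum_pr_mul μ' hY]
  exact Finset.sum_congr rfl fun s _ ↦ by rw [h s]

lemma sum_eq (h : SameLaw μ μ' X Y) : ∑ ω, μ ω = ∑ ω, μ' ω := by
  simpa using h.sum_mul_eq 1

lemma comp (h : SameLaw μ μ' X Y) (f : S → T) :
    SameLaw μ μ' (fun ω ↦ f (X ω)) (fun ω ↦ f (Y ω)) := fun t ↦ by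
  simpa [pr] using h.sum_mul_eq fun s ↦ if f s = t then 1 else 0

lemma ent_eq (h : SameLaw μ μ' X Y) : ent μ X = ent μ' Y := by
  rw [ent_eq_neg_sum_mul_logb, ent_eq_neg_sum_mul_logb,
    h.sum_mul_eq fun s ↦ Real.logb 2 (pr μ fun ω ↦ X ω = s)]
  simp only [h _]

lemma condEnt_comp_eq (h : SameLaw μ μ' X Y) (f : S → A) (g : S → B) :
    condEnt μ (fun ω ↦ f (X ω)) (fun ω ↦ g (X ω)) =
      condEnt μ' (fun ω ↦ f (Y ω)) (fun ω ↦ g (Y ω)) :=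
  congrArg₂ (· - ·) (h.comp fun s ↦ (f s, g s)).ent_eq (h.comp g).ent_eq

lemma condMutualInfo_comp_eq (h : SameLaw μ μ' X Y) (e : S → A) (f : S → B) (g : S → C) :
    condMutualInfo μ (fun ω ↦ e (X ω)) (fun ω ↦ f (X ω)) (fun ω ↦ g (X ω)) =
      condMutualInfo μ' (fun ω ↦ e (Y ω)) (fun ω ↦ f (Y ω)) (fun ω ↦ g (Y ω)) := by
  rw [condMutualInfo, condMutualInfo, h.condEnt_comp_eq e g, h.condEnt_comp_eq f g,
    h.condEnt_comp_eq (fun s ↦ (e s, f s)) g]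

lemma prodMk_iff {α : Ω → A} {β : Ω → B} {α' : Ω' → A} {β' : Ω' → B} :
    SameLaw μ μ' (fun ω ↦ (α ω, β ω)) (fun ω ↦ (α' ω, β' ω)) ↔
      ∀ a b, pr μ (fun ω ↦ α ω = a ∧ β ω = b) = pr μ' fun ω ↦ α' ω = a ∧ β' ω = b := by
  simp only [SameLaw, Prod.forall, Prod.mk.injEq]

lemma condIndepOrder {α : Ω → A} {β : Ω → B} {α' : Ω' → A} {β' : Ω' → B}
    (h : SameLaw μ μ' (fun ω ↦ (α ω, β ω)) fun ω ↦ (α' ω, β' ω)) {k : ℕ}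
    (hk : CondIndepOrder μ α β k) : CondIndepOrder μ' α' β' k := by
  have joint := prodMk_iff.1 h
  cases k with
  | zero =>
    intro a b
    rw [← joint, ← h.comp Prod.fst a, ← h.comp Prod.snd b]
    exact hk a b
  | succ k =>
    obtain ⟨Ω₁, A₁, B₁, _, μ₁, α₀, β₀, αs, βs, hμ₁, hlaw, hrest⟩ := hk
    exact ⟨Ω₁, A₁, B₁, _, μ₁, α₀, β₀, αs, βs, hμ₁, fun a b ↦ (hlaw a b).trans (joint a b), hrest⟩

end SameLaw

section Coupling

variable {Ω Ω' A B C D S : Type} [Fintype Ω] {μ : Ω → ℝ} {μ' : Ω' → ℝ} {X : Ω → S} {Y : Ω' → S}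

/-- The coupling of `μ` and `μ'` along the common law of `X` and `Y`, with the two points
conditionally independent given the common value. It lives on the fibre product rather than on
`Ω × Ω'`, so `X` and `Y` agree everywhere and not just almost surely. Where the denominator
vanishes so does a nonnegative `μ`, hence the value `x / 0 = 0` is the right one. -/
noncomputable def coupling (μ : Ω → ℝ) (μ' : Ω' → ℝ) (X : Ω → S) (Y : Ω' → S) :
    X.Pullback Y → ℝ :=
  fun p ↦ μ p.fst / pr μ (fun ω ↦ X ω = X p.fst) * μ' p.snd

lemma coupling_nonneg (hμ : ∀ ω, 0 ≤ μ ω) (hμ' : ∀ ω, 0 ≤ μ' ω) (X : Ω → S) (Y : Ω' → S)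
    (p : X.Pullback Y) : 0 ≤ coupling μ μ' X Y p :=
  mul_nonneg (div_nonneg (hμ _) (pr_nonneg hμ _)) (hμ' _)

variable [Fintype Ω']

lemma sum_pullback (X : Ω → S) (Y : Ω' → S) (f : Ω → Ω' → ℝ) :
    ∑ p : X.Pullback Y, f p.fst p.snd = ∑ ω, ∑ ω', if X ω = Y ω' then f ω ω' else 0 := by
  rw [← Fintype.sum_prod_type', ← Finset.sum_filter]
  exact (Finset.sum_subtype _ (by simp) fun p : Ω × Ω' ↦ f p.1 p.2).symm

lemma pr_pullback_fst_eq (X : Ω → S) (Y : Ω' → S) (f : Ω → Ω' → ℝ) (ω : Ω) :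
    pr (fun p : X.Pullback Y ↦ f p.fst p.snd) (fun p ↦ p.fst = ω) =
      pr (f ω) fun ω' ↦ Y ω' = X ω := by
  unfold pr
  rw [sum_pullback X Y fun ω₁ ω' ↦ if ω₁ = ω then f ω₁ ω' else 0, Finset.sum_comm]
  refine Finset.sum_congr rfl fun ω' _ ↦ ?_
  rw [Fintype.sum_eq_single ω (by simp +contextual), if_pos rfl]
  exact if_congr eq_comm rfl rfl

lemma pr_pullback_snd_eq (X : Ω → S) (Y : Ω' → S) (f : Ω → Ω' → ℝ) (ω' : Ω') :
    pr (fun p : X.Pullback Y ↦ f p.fst p.snd) (fun p ↦ p.snd = ω') =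
      pr (fun ω ↦ f ω ω') fun ω ↦ X ω = Y ω' := by
  unfold pr
  rw [sum_pullback X Y fun ω ω₁ ↦ if ω₁ = ω' then f ω ω₁ else 0]
  refine Finset.sum_congr rfl fun ω _ ↦ ?_
  rw [Fintype.sum_eq_single ω' (by simp +contextual), if_pos rfl]

lemma coupling_eq_div_pr_snd (h : SameLaw μ μ' X Y) :
    coupling μ μ' X Y = fun p ↦ μ' p.snd / pr μ' (fun ω ↦ Y ω = Y p.snd) * μ p.fst := by
  funext p
  have hp : X p.fst = Y p.snd := p.2
  rw [coupling, h, hp]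
  ring

lemma sameLaw_coupling_fst (hμ : ∀ ω, 0 ≤ μ ω) (h : SameLaw μ μ' X Y) :
    SameLaw (coupling μ μ' X Y) μ Function.Pullback.fst id := by
  intro ω
  unfold coupling
  rw [pr_pullback_fst_eq X Y fun ω ω' ↦ μ ω / pr μ (fun ω₁ ↦ X ω₁ = X ω) * μ' ω', pr_const_mul,
    ← h, pr_id_eq]
  exact div_pr_mul_pr hμ X ω

lemma sameLaw_coupling_snd (hμ' : ∀ ω, 0 ≤ μ' ω) (h : SameLaw μ μ' X Y) :
    SameLaw (coupling μ μ' X Y) μ' Function.Pullback.snd id := by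
  intro ω'
  rw [coupling_eq_div_pr_snd h,
    pr_pullback_snd_eq X Y fun ω ω' ↦ μ' ω' / pr μ' (fun ω₁ ↦ Y ω₁ = Y ω') * μ ω, pr_const_mul,
    h, pr_id_eq]
  exact div_pr_mul_pr hμ' Y ω'

lemma SameLaw.exists_coupling (hμ : ∀ ω, 0 ≤ μ ω) (hμ' : ∀ ω, 0 ≤ μ' ω) (h : SameLaw μ μ' X Y) :
    ∃ (Ω'' : Type) (_ : Fintype Ω'') (ν : Ω'' → ℝ) (π : Ω'' → Ω) (π' : Ω'' → Ω'),
      (∀ p, 0 ≤ ν p) ∧ SameLaw ν μ π id ∧ SameLaw ν μ' π' id ∧ ∀ p, X (π p) = Y (π' p) :=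
  ⟨X.Pullback Y, inferInstance, coupling μ μ' X Y, Function.Pullback.fst, Function.Pullback.snd,
    coupling_nonneg hμ hμ' X Y, sameLaw_coupling_fst hμ h, sameLaw_coupling_snd hμ' h,
    fun p ↦ p.2⟩

lemma condEnt_comp_le_of_sameLaw {Ω'' : Type} [Fintype Ω''] {ν : Ω'' → ℝ} {π : Ω'' → Ω}
    {π' : Ω'' → Ω'} (hν : ∀ p, 0 ≤ ν p) (hπ : SameLaw ν μ π id) (hπ' : SameLaw ν μ' π' id)
    {α : Ω → A} {β : Ω → B} {α₀ : Ω' → A} {β₀ : Ω' → B}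
    (hαβ : ∀ p, (α (π p), β (π p)) = (α₀ (π' p), β₀ (π' p))) (γ : Ω → C) (δ : Ω' → D) :
    condEnt ν (fun p ↦ γ (π p)) (fun p ↦ δ (π' p)) ≤
      condEnt μ γ α + condEnt μ γ β + condMutualInfo μ' α₀ β₀ δ := by
  have hα (p : Ω'') : α (π p) = α₀ (π' p) := congrArg Prod.fst (hαβ p)
  have hβ (p : Ω'') : β (π p) = β₀ (π' p) := congrArg Prod.snd (hαβ p)
  calc condEnt ν (fun p ↦ γ (π p)) (fun p ↦ δ (π' p))
      ≤ condEnt ν (fun p ↦ γ (π p)) (fun p ↦ α (π p)) +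
          condEnt ν (fun p ↦ γ (π p)) (fun p ↦ β (π p)) +
          condMutualInfo ν (fun p ↦ α (π p)) (fun p ↦ β (π p)) (fun p ↦ δ (π' p)) :=
        condEnt_le_condEnt_add_condEnt_add_condMutualInfo hν _ _ _ _
    _ = condEnt μ γ α + condEnt μ γ β + condMutualInfo μ' α₀ β₀ δ := by
        rw [hπ.condEnt_comp_eq γ α, hπ.condEnt_comp_eq γ β]
        simp only [hα, hβ]
        rw [hπ'.condMutualInfo_comp_eq α₀ β₀ δ]
        rfl

end Coupling

/-- If random variables `α` and `β` on a finite probability space are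
conditionally independent of order `k`, and `γ` is an arbitrary random variable on
the same probability space, then `H(γ) ≤ 2^k·H(γ|α) + 2^k·H(γ|β)`. -/
theorem ent_le_of_condIndepOrder {Ω A B C : Type} [Fintype Ω]
    (μ : Ω → ℝ) (hμ : IsProb μ) (α : Ω → A) (β : Ω → B) (γ : Ω → C) (k : ℕ)
    (h : CondIndepOrder μ α β k) :
    ent μ γ ≤ (2:ℝ) ^ k * condEnt μ γ α + (2:ℝ) ^ k * condEnt μ γ β := by
  induction k generalizing Ω A B with
  | zero =>
    simpa [mutualInfo_eq_zero_of_indep hμ.1 h] using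
      ent_le_condEnt_add_condEnt_add_mutualInfo hμ.1 α β γ
  | succ k ih =>
    obtain ⟨Ω', A', B', _, μ', α₀, β₀, αs, βs, hμ', hjoint, hαs, hβs, hk⟩ := h
    have hlaw := (SameLaw.prodMk_iff.2 hjoint).symm
    obtain ⟨Ω'', _, ν, π, π', hν, hπ, hπ', hαβ⟩ := hlaw.exists_coupling hμ.1 hμ'.1
    have hαβs : CondIndepOrder ν (fun p ↦ αs (π' p)) (fun p ↦ βs (π' p)) k :=
      (hπ'.comp fun ω ↦ (αs ω, βs ω)).symm.condIndepOrder hk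
    have bound {D : Type} (δ : Ω' → D) (hδ : condMutualInfo μ' α₀ β₀ δ = 0) :
        condEnt ν (fun p ↦ γ (π p)) (fun p ↦ δ (π' p)) ≤ condEnt μ γ α + condEnt μ γ β := by
      simpa only [hδ, add_zero] using condEnt_comp_le_of_sameLaw hν hπ hπ' hαβ γ δ
    calc ent μ γ = ent ν (fun p ↦ γ (π p)) := (hπ.comp γ).ent_eq.symm
      _ ≤ 2 ^ k * condEnt ν (fun p ↦ γ (π p)) (fun p ↦ αs (π' p)) +
            2 ^ k * condEnt ν (fun p ↦ γ (π p)) (fun p ↦ βs (π' p)) :=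
          ih ν ⟨hν, hπ.sum_eq.trans hμ.2⟩ _ _ _ hαβs
      _ ≤ 2 ^ k * (condEnt μ γ α + condEnt μ γ β) + 2 ^ k * (condEnt μ γ α + condEnt μ γ β) := by
          gcongr
          exacts [bound αs hαs, bound βs hβs]
      _ = 2 ^ (k + 1) * condEnt μ γ α + 2 ^ (k + 1) * condEnt μ γ β := by ring
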